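/- arXiv:1407.8380 — 2 statements merged into one kernel-verified Lean document; each statement's English description precedes it below -/
import Mathlib

section
/- Let f,g:ℝⁿ→ℝⁿ be smooth vector fields, V:ℝⁿ→ℝ smooth, u₁,u₂∈ℝ, ρ>0, and set X:=f+u₁g, Y:=f+u₂g, A₀:=ρX+Y, A₁:=[Y,X]. Let x₀∈ℝⁿ and define m(t):=V(X_{ρt}(Y_t(x₀))) for t≥0 small enough that both flows are defined, where X_t(z), Y_t(z) denote the flows of ẋ=X(x) and ẏ=Y(y) from z at time 0. Then m is twice differentiable at t=0 and m″(0) = (A₀²V)(x₀) + ρ(A₁V)(x₀), where (A₀²V):=A₀(A₀V). -/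
open MeasureTheory Filter Set

noncomputable section

/-- `Euc n` is the Euclidean state space `ℝⁿ`. -/
abbrev Euc (n : ℕ) : Type := EuclideanSpace ℝ (Fin n)

/-- A control is admissible if it is measurable and locally essentially bounded. -/
def AdmissibleControl {U : Type*} [NormedAddCommGroup U] [MeasurableSpace U]
    (u : ℝ → U) : Prop :=
  Measurable u ∧ ∀ T : ℝ, ∃ C : ℝ, ∀ᵐ t ∂(volume.restrict (Icc (-T) T)), ‖u t‖ ≤ C

/-- `x` is a (Carathéodory) solution of `ẋ = f(x, u(t))` with `x s = x₀`, on `[s, b]`. -/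
def IsSolOn {n : ℕ} {U : Type*} (f : Euc n → U → Euc n) (u : ℝ → U) (s : ℝ)
    (x₀ : Euc n) (x : ℝ → Euc n) (b : ℝ) : Prop :=
  ∀ t ∈ Icc s b, x t = x₀ + ∫ τ in s..t, f (x τ) (u τ)

/-- `x` is a (Carathéodory) solution of `ẋ = f(x, u(t))` with `x s = x₀`, on `[s, ∞)`. -/
def IsSolGlobal {n : ℕ} {U : Type*} (f : Euc n → U → Euc n) (u : ℝ → U) (s : ℝ)
    (x₀ : Euc n) (x : ℝ → Euc n) : Prop :=
  ∀ t, s ≤ t → x t = x₀ + ∫ τ in s..t, f (x τ) (u τ)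

/-- Vector fields on `ℝⁿ`. -/
abbrev VF (n : ℕ) : Type := Euc n → Euc n

/-- `(XV)(x) := DV(x)·X(x)`, the derivative of `V` along the vector field `X`. -/
def vfD {n : ℕ} (X : VF n) (V : Euc n → ℝ) : Euc n → ℝ := fun x => fderiv ℝ V x (X x)

/-- Lie bracket `[X,Y] := (DY)X − (DX)Y`. -/
def lieB {n : ℕ} (X Y : VF n) : VF n := fun x => fderiv ℝ Y x (X x) - fderiv ℝ X x (Y x)

/-- `iterD X V i = XⁱV`, with `X⁰V = V` and `X^{i+1}V = X(XⁱV)`. -/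
def iterD {n : ℕ} (X : VF n) (V : Euc n → ℝ) : ℕ → (Euc n → ℝ)
  | 0 => V
  | i + 1 => vfD X (iterD X V i)

/-- `applyVFs [Δ₁, …, Δ_k] V = Δ₁Δ₂⋯Δ_kV`. -/
def applyVFs {n : ℕ} : List (VF n) → (Euc n → ℝ) → (Euc n → ℝ)
  | [], V => V
  | X :: L, V => vfD X (applyVFs L V)

/-- `adIter X Y N = [[…[[X,Y],Y],…,Y],Y]` (`N` iterated brackets with `Y`). -/
def adIter {n : ℕ} (X Y : VF n) : ℕ → VF n
  | 0 => X
  | k + 1 => lieB (adIter X Y k) Y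

/-- `Lk f g i` is the subspace `L_{i+1}` of the paper:
`L₁ = span{f,g}` and `L_{i+1} = span{[X,Y] : X ∈ L_i, Y ∈ L₁}`. -/
def Lk {n : ℕ} (f g : VF n) : ℕ → Submodule ℝ (VF n)
  | 0 => Submodule.span ℝ {f, g}
  | i + 1 => Submodule.span ℝ
      {Z : VF n | ∃ X ∈ Lk f g i, ∃ Y ∈ Submodule.span ℝ ({f, g} : Set (VF n)), Z = lieB X Y}

/-- The Lie algebra generated by `{f, g}` (the span of all the `L_i`). -/
def LieGen {n : ℕ} (f g : VF n) : Submodule ℝ (VF n) := ⨆ i : ℕ, Lk f g i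

/-- `hasOrder f g Δ k` : `Δ` has order `k` with respect to `{f,g}`:
order `1` iff `Δ ∈ L₁ \ {0}`; order `k > 1` iff `Δ = Δ₁ + Δ₂` with
`Δ₁ ∈ L_k \ {0}` and `Δ₂ ∈ span{∪_{i=1}^{k-1} L_i}`. -/
def hasOrder {n : ℕ} (f g : VF n) (Δ : VF n) : ℕ → Prop
  | 0 => False
  | 1 => Δ ∈ Lk f g 0 ∧ Δ ≠ 0
  | k + 2 => ∃ Δ₁ Δ₂ : VF n, Δ₁ ∈ Lk f g (k + 1) ∧ Δ₁ ≠ 0 ∧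
      Δ₂ ∈ (⨆ i ∈ Finset.range (k + 1), Lk f g i) ∧ Δ = Δ₁ + Δ₂

/-- `(Δ₁Δ₂⋯Δ_kV)(x) = 0` for all `Δ₁,…,Δ_k ∈ Lie{f,g} ∖ {g}` with
`Σ_p order_{{f,g}} Δ_p ≤ N`. -/
def LieCondZero {n : ℕ} (f g : VF n) (V : Euc n → ℝ) (x : Euc n) (N : ℕ) : Prop :=
  ∀ (Δs : List (VF n)) (os : List ℕ), Δs ≠ [] → Δs.length = os.length →
    (∀ p ∈ List.zip Δs os, p.1 ∈ LieGen f g ∧ p.1 ≠ g ∧ hasOrder f g p.1 p.2) →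
    os.sum ≤ N → applyVFs Δs V x = 0

section helpers

variable {E : Type*} [NormedAddCommGroup E] [NormedSpace ℝ E] 

/-- Lipschitz on every ball centred at the origin. -/
def LipBalls {Z : Type*} [NormedAddCommGroup Z] (G : Z → Z) : Prop :=
  ∀ R : ℝ, ∃ K : NNReal, LipschitzOnWith K G (Metric.closedBall 0 R)

lemma LipBalls.continuous {Z : Type*} [NormedAddCommGroup Z] {G : Z → Z} (hG : LipBalls G) :
    Continuous G := by
  rw [continuous_iff_continuousAt]
  intro x
  obtain ⟨K, hK⟩ := hG (‖x‖ + 1)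
  refine hK.continuousOn.continuousAt ?_
  refine Filter.mem_of_superset (Metric.ball_mem_nhds x one_pos) ?_
  intro y hy
  rw [mem_closedBall_zero_iff]
  rw [Metric.mem_ball, dist_eq_norm] at hy
  have := norm_le_norm_add_norm_sub' y x
  linarith

lemma ode_unique {Z : Type*} [NormedAddCommGroup Z] [NormedSpace ℝ Z] {G : Z → Z}
    (hG : LipBalls G) {a b : ℝ → Z} {r : ℝ}
    (ha : ∀ t ∈ Ioo (-r) r, HasDerivAt a (G (a t)) t)
    (hb : ∀ t ∈ Ioo (-r) r, HasDerivAt b (G (b t)) t) (h0 : a 0 = b 0) :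
    ∀ t ∈ Ioo (-r) r, a t = b t := by
  intro t ht
  set r' := (|t| + r) / 2 with hr'
  have htr : |t| < r := abs_lt.2 ht
  have h1 : |t| < r' := by linarith
  have h2 : r' < r := by linarith
  have hr0 : 0 < r' := lt_of_le_of_lt (abs_nonneg t) h1
  have hsub : Icc (-r') r' ⊆ Ioo (-r) r := fun x hx => ⟨by linarith [hx.1], by linarith [hx.2]⟩
  have hca : ContinuousOn a (Icc (-r') r') :=
    fun x hx => (ha x (hsub hx)).continuousAt.continuousWithinAt
  have hcb : ContinuousOn b (Icc (-r') r') :=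
    fun x hx => (hb x (hsub hx)).continuousAt.continuousWithinAt
  obtain ⟨Ca, hCa⟩ := isCompact_Icc.exists_bound_of_continuousOn hca
  obtain ⟨Cb, hCb⟩ := isCompact_Icc.exists_bound_of_continuousOn hcb
  obtain ⟨K, hK⟩ := hG (max Ca Cb)
  have hs : Ioo (-r') r' ⊆ Icc (-r') r' := Ioo_subset_Icc_self
  refine ODE_solution_unique_of_mem_Ioo (v := fun _ => G)
    (s := fun _ => Metric.closedBall 0 (max Ca Cb)) (t₀ := 0) (a := -r') (b := r') (K := K)
    (fun _ _ => hK) ⟨by linarith, hr0⟩ ?_ ?_ h0 (abs_lt.1 h1)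
  · intro s hs'
    refine ⟨ha s (hsub (hs hs')), ?_⟩
    rw [mem_closedBall_zero_iff]
    exact (hCa s (hs hs')).trans (le_max_left _ _)
  · intro s hs'
    refine ⟨hb s (hsub (hs hs')), ?_⟩
    rw [mem_closedBall_zero_iff]
    exact (hCb s (hs hs')).trans (le_max_right _ _)

lemma local_flow {Z : Type*} [NormedAddCommGroup Z] [NormedSpace ℝ Z] [CompleteSpace Z]
    {G : Z → Z} (hG : LipBalls G) (z₀ : Z) :
    ∃ r > 0, ∃ η > 0, ∃ α : Z × ℝ → Z,
      (∀ z ∈ Metric.ball z₀ r, α (z, 0) = z ∧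
        ∀ t ∈ Ioo (-η) η, HasDerivAt (fun s => α (z, s)) (G (α (z, t))) t) ∧
      ∀ z ∈ Metric.ball z₀ r, ∀ t ∈ Ioo (-η) η, ContinuousAt α (z, t) := by
  obtain ⟨K, hK⟩ := hG (‖z₀‖ + 1)
  have hsub : Metric.closedBall z₀ 1 ⊆ Metric.closedBall 0 (‖z₀‖ + 1) := by
    apply Metric.closedBall_subset_closedBall'
    rw [dist_zero_right]; linarith
  have hK' : LipschitzOnWith K G (Metric.closedBall z₀ 1) := hK.mono hsub
  set L : NNReal := ‖G z₀‖₊ + K with hL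
  have hb : ∀ x ∈ Metric.closedBall z₀ 1, ‖G x‖ ≤ L := by
    intro x hx
    have h := hK'.dist_le_mul x hx z₀ (Metric.mem_closedBall_self zero_le_one)
    have h2 : dist x z₀ ≤ 1 := hx
    have h3 := norm_le_norm_add_norm_sub' (G x) (G z₀)
    rw [dist_eq_norm] at h
    have : (K : ℝ) * dist x z₀ ≤ K := mul_le_of_le_one_right K.2 h2
    rw [hL]; push_cast; linarith
  set η : ℝ := 1 / (2 * (L + 1)) with hη
  have hL0 : (0 : ℝ) ≤ L := L.2
  have hη0 : 0 < η := by positivity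
  have hm : (L : ℝ) * η ≤ 1 / 2 := by
    rw [hη, mul_one_div, div_le_div_iff₀ (by positivity) (by positivity)]; linarith
  have hP : IsPicardLindelof (fun _ => G) (tmin := -η) (tmax := η)
      ⟨0, by constructor <;> linarith⟩ z₀ 1 (1/2) L K := by
    refine IsPicardLindelof.of_time_independent (by simpa using hb) (by simpa using hK') ?_
    simp only [sub_zero, zero_sub, neg_neg, max_self]
    push_cast; linarith
  obtain ⟨α, hα, hc⟩ := hP.exists_forall_mem_closedBall_eq_hasDerivWithinAt_continuousOn
  have hbs : Metric.ball z₀ (1/2) ⊆ Metric.closedBall z₀ ((1/2 : NNReal) : ℝ) := by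
    push_cast; exact Metric.ball_subset_closedBall
  refine ⟨1/2, by norm_num, η, hη0, α, ?_, ?_⟩
  · intro z hz
    obtain ⟨h1, h2⟩ := hα z (hbs hz)
    exact ⟨h1, fun t ht => (h2 t (Ioo_subset_Icc_self ht)).hasDerivAt (Icc_mem_nhds ht.1 ht.2)⟩
  · intro z hz t ht
    refine hc.continuousAt (prod_mem_nhds ?_ (Icc_mem_nhds ht.1 ht.2))
    exact Filter.mem_of_superset (Metric.isOpen_ball.mem_nhds hz) hbs

/-- Derivative at time zero of a flow along a moving initial point. -/
lemma flow_deriv_zero {Z : Type*} [NormedAddCommGroup Z] [NormedSpace ℝ Z] {G : Z → Z}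
    (hG : Continuous G) {z₀ : Z} {r η : ℝ} (hr : 0 < r) (hη : 0 < η) {α : Z × ℝ → Z}
    (hα : ∀ z ∈ Metric.ball z₀ r, α (z, 0) = z ∧
        ∀ t ∈ Ioo (-η) η, HasDerivAt (fun s => α (z, s)) (G (α (z, t))) t)
    (hc : ∀ z ∈ Metric.ball z₀ r, ∀ t ∈ Ioo (-η) η, ContinuousAt α (z, t))
    {ρ : ℝ} {ζ : ℝ → Z} {ζ' : Z} (hζ0 : ζ 0 = z₀) (hζ : HasDerivAt ζ ζ' 0) :
    HasDerivAt (fun t => α (ζ t, ρ * t)) (ρ • G z₀ + ζ') 0 := by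
  have hz0 : α (z₀, 0) = z₀ := (hα z₀ (Metric.mem_ball_self hr)).1
  suffices h : HasDerivAt (fun t => α (ζ t, ρ * t) - ζ t) (ρ • G z₀) 0 by
    have := h.add hζ
    refine this.congr_of_eventuallyEq (Filter.Eventually.of_forall fun t => ?_)
    simp
  rw [hasDerivAt_iff_isLittleO, Asymptotics.isLittleO_iff]
  intro c hc0
  -- continuity of G ∘ α at (z₀, 0)
  have hcont : ContinuousAt (fun p => G (α p)) (z₀, (0 : ℝ)) :=
    hG.continuousAt.comp (hc z₀ (Metric.mem_ball_self hr) 0 ⟨by linarith, hη⟩)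
  set c' := c / (|ρ| + 1) with hc'
  have hc'0 : 0 < c' := by positivity
  obtain ⟨d, hd, hdd⟩ := Metric.continuousAt_iff.1 hcont c' hc'0
  have e1 : ∀ᶠ t in nhds (0 : ℝ), ζ t ∈ Metric.ball z₀ (min r d) := by
    apply hζ.continuousAt.eventually_mem
    rw [hζ0]
    exact Metric.ball_mem_nhds _ (lt_min hr hd)
  have e2 : ∀ᶠ t in nhds (0 : ℝ), |ρ * t| < min η d := by
    have : ContinuousAt (fun t : ℝ => |ρ * t|) 0 := by fun_prop
    apply this.eventually_lt continuousAt_const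
    simpa using ⟨hη, hd⟩
  filter_upwards [e1, e2] with t h1 h2
  have hzt : ζ t ∈ Metric.ball z₀ r := Metric.ball_subset_ball (min_le_left _ _) h1
  have hztd : dist (ζ t) z₀ < d := lt_of_lt_of_le h1 (min_le_right _ _)
  obtain ⟨k0, k1⟩ := hα _ hzt
  have key : ‖(α (ζ t, ρ * t) - (ρ * t) • G z₀) - (α (ζ t, 0) - (0:ℝ) • G z₀)‖
      ≤ c' * ‖ρ * t - 0‖ := by
    refine Convex.norm_image_sub_le_of_norm_hasDerivWithin_le
      (f := fun s => α (ζ t, s) - s • G z₀) (f' := fun s => G (α (ζ t, s)) - G z₀)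
      (s := Ioo (-(min η d)) (min η d)) ?_ ?_ (convex_Ioo _ _) ?_ ?_
    · intro s hs
      have hs' : |s| < min η d := abs_lt.2 hs
      have a1 := k1 s (abs_lt.1 (hs'.trans_le (min_le_left _ _)))
      have a2 := (hasDerivAt_id s).smul_const (G z₀)
      have a3 := (a1.sub a2).hasDerivWithinAt (s := Ioo (-(min η d)) (min η d))
      rw [one_smul] at a3
      exact a3
    · intro s hs
      have hs' : |s| < min η d := abs_lt.2 hs
      have : dist (ζ t, s) (z₀, (0:ℝ)) < d := by
        rw [Prod.dist_eq]
        refine max_lt hztd ?_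
        simpa using hs'.trans_le (min_le_right _ _)
      have := hdd this
      simp only [hz0] at this
      rw [dist_eq_norm] at this
      exact this.le
    · constructor <;> simp [hη, hd]
    · exact abs_lt.1 h2
  have hz : α (ζ 0, ρ * 0) = ζ 0 := by rw [hζ0, mul_zero, hz0]
  simp only [hz, sub_self, sub_zero]
  rw [k0] at key
  simp only [zero_smul, sub_zero] at key
  have e : α (ζ t, ρ * t) - ζ t - t • ρ • G z₀ = α (ζ t, ρ * t) - (ρ * t) • G z₀ - ζ t := by
    rw [smul_smul, mul_comm t ρ]; abel
  rw [e]
  refine key.trans ?_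
  rw [norm_mul, hc', Real.norm_eq_abs, ← mul_assoc]
  gcongr
  rw [div_mul_eq_mul_div, div_le_iff₀ (by positivity)]
  nlinarith [abs_nonneg ρ]

/-- The extended vector field. -/
def extG (X : E → E) : E × ℝ × E → E × ℝ × E := fun z =>
  (X z.1, 0, ∫ θ in (0:ℝ)..1, fderiv ℝ X (z.1 + (θ * z.2.1) • z.2.2) z.2.2)

lemma contDiff_kernel {X : E → E} (hX : ContDiff ℝ 2 X) :
    ContDiff ℝ 1 (fun p : ℝ × (E × ℝ × E) =>
      fderiv ℝ X (p.2.1 + (p.1 * p.2.2.1) • p.2.2.2) p.2.2.2) := by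
  have h : ContDiff ℝ 1 (fderiv ℝ X) := hX.fderiv_right (by norm_num)
  refine ContDiff.clm_apply (h.comp ?_) ?_ <;> fun_prop

lemma lipBalls_extG [FiniteDimensional ℝ E] {X : E → E} (hX : ContDiff ℝ 2 X) : LipBalls (extG X) := by
  intro R
  have hker := contDiff_kernel hX
  have hcomp : IsCompact (Icc (0:ℝ) 1 ×ˢ Metric.closedBall (0 : E × ℝ × E) R) :=
    isCompact_Icc.prod (isCompact_closedBall _ _)
  obtain ⟨K, hK⟩ := LocallyLipschitzOn.exists_lipschitzOnWith_of_compact hcomp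
    hker.locallyLipschitz.locallyLipschitzOn
  have hX1 : ContDiff ℝ 1 (fun z : E × ℝ × E => X z.1) :=
    (hX.of_le (by norm_num)).comp contDiff_fst
  obtain ⟨K', hK'⟩ := LocallyLipschitzOn.exists_lipschitzOnWith_of_compact
    (isCompact_closedBall (0 : E × ℝ × E) R) hX1.locallyLipschitz.locallyLipschitzOn
  refine ⟨max K' K, LipschitzOnWith.of_dist_le_mul fun x hx y hy => ?_⟩
  have hint : ∀ z : E × ℝ × E, IntervalIntegrable
      (fun θ : ℝ => fderiv ℝ X (z.1 + (θ * z.2.1) • z.2.2) z.2.2) volume 0 1 := by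
    intro z
    refine Continuous.intervalIntegrable ?_ _ _
    exact hker.continuous.comp (Continuous.prodMk_left z)
  simp only [extG, Prod.dist_eq]
  have hd : max (dist x.1 y.1) (max (dist x.2.1 y.2.1) (dist x.2.2 y.2.2)) = dist x y := by
    simp [Prod.dist_eq]
  rw [hd]
  push_cast
  refine max_le ?_ (max_le ?_ ?_)
  · refine (hK'.dist_le_mul x hx y hy).trans ?_
    gcongr; exact le_max_left _ _
  · simp only [dist_self]; positivity
  · rw [dist_eq_norm, ← intervalIntegral.integral_sub (hint x) (hint y)]
    have := intervalIntegral.norm_integral_le_of_norm_le_const (a := (0:ℝ)) (b := 1)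
      (f := fun θ => fderiv ℝ X (x.1 + (θ * x.2.1) • x.2.2) x.2.2 -
        fderiv ℝ X (y.1 + (θ * y.2.1) • y.2.2) y.2.2) (C := K * dist x y) ?_
    · refine this.trans ?_
      simp only [sub_zero, abs_one, mul_one]
      gcongr; exact le_max_right _ _
    · intro θ hθ
      rw [uIoc_of_le zero_le_one] at hθ
      have hθ' := Ioc_subset_Icc_self hθ
      have := hK.dist_le_mul (θ, x) ⟨hθ', hx⟩ (θ, y) ⟨hθ', hy⟩
      rw [dist_eq_norm] at this
      refine this.trans (le_of_eq ?_)
      simp [Prod.dist_eq]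

lemma extG_smul [CompleteSpace E] {X : E → E} (hX : ContDiff ℝ 2 X) (a : E) (h : ℝ) (q : E) :
    h • (extG X (a, h, q)).2.2 = X (a + h • q) - X a := by
  have hker := contDiff_kernel hX
  have hc : Continuous (fun θ : ℝ => fderiv ℝ X (a + (θ * h) • q) q) :=
    hker.continuous.comp (Continuous.prodMk_left (a, h, q))
  simp only [extG]
  rw [← intervalIntegral.integral_smul]
  have := intervalIntegral.integral_eq_sub_of_hasDerivAt (a := (0:ℝ)) (b := 1)
    (f := fun θ => X (a + (θ * h) • q))
    (f' := fun θ => h • fderiv ℝ X (a + (θ * h) • q) q) ?_ ?_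
  · simpa using this
  · intro θ _
    have h1 : HasDerivAt (fun θ : ℝ => a + (θ * h) • q) (h • q) θ := by
      have := (((hasDerivAt_id θ).mul_const h).smul_const q).const_add a
      simpa using this
    have h2 := ((hX.differentiable (by norm_num)) (a + (θ * h) • q)).hasFDerivAt
    have := h2.comp_hasDerivAt θ h1
    simpa [Function.comp_def] using this
  · exact (hc.const_smul h).intervalIntegrable _ _

lemma curve_deriv [FiniteDimensional ℝ E] {X Y : E → E} (hX : ContDiff ℝ 2 X)
    (hY : Differentiable ℝ Y) (ρ : ℝ) (x₀ : E)
    (Φ : ℝ → E → E) (ψ : ℝ → E) (δ : ℝ) (hδ : 0 < δ)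
    (U : Set E)
    (hΦ0 : ∀ z ∈ U, Φ 0 z = z)
    (hΦ : ∀ z ∈ U, ∀ t ∈ Ioo (-δ) δ, HasDerivAt (fun s => Φ s z) (X (Φ t z)) t)
    (hψ0 : ψ 0 = x₀)
    (hψ : ∀ t ∈ Ioo (-δ) δ, HasDerivAt ψ (Y (ψ t)) t)
    (hψU : ∀ t ∈ Ioo (-δ) δ, ψ t ∈ U) :
    ∃ ε : ℝ, 0 < ε ∧ ∃ Q : ℝ → E,
      (∀ t ∈ Ioo (-ε) ε, HasDerivAt (fun s => Φ (ρ * s) (ψ s))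
        (ρ • X (Φ (ρ * t) (ψ t)) + Q t) t) ∧ Q 0 = Y x₀ ∧
      HasDerivAt Q (ρ • fderiv ℝ X x₀ (Y x₀) + fderiv ℝ Y x₀ (Y x₀)) 0 := by
  have : CompleteSpace E := FiniteDimensional.complete ℝ E
  have hG := lipBalls_extG hX
  set z₀ : E × ℝ × E := (x₀, 0, Y x₀) with hz₀
  obtain ⟨r, hr, η, hη, α, hα, hc⟩ := local_flow hG z₀
  have h0δ : (0:ℝ) ∈ Ioo (-δ) δ := ⟨by linarith, hδ⟩
  have hψ'0 : HasDerivAt ψ (Y x₀) 0 := by simpa [hψ0] using hψ 0 h0δ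
  -- representation of the divided difference
  have hrep : ∀ t ∈ Ioo (-δ) δ, ∀ h : ℝ, h ≠ 0 → t + h ∈ Ioo (-δ) δ →
      ((ψ t, h, h⁻¹ • (ψ (t + h) - ψ t)) : E × ℝ × E) ∈ Metric.ball z₀ r →
      ∀ s ∈ Ioo (-(min η δ)) (min η δ), α ((ψ t, h, h⁻¹ • (ψ (t + h) - ψ t)), s) =
        (Φ s (ψ t), h, h⁻¹ • (Φ s (ψ (t + h)) - Φ s (ψ t))) := by
    intro t ht h hh hth hb
    obtain ⟨a0, a1⟩ := hα _ hb
    refine ode_unique hG (fun s hs => a1 s ?_) (fun s hs => ?_) ?_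
    · exact abs_lt.1 ((abs_lt.2 hs).trans_le (min_le_left _ _))
    · have hs' : s ∈ Ioo (-δ) δ := abs_lt.1 ((abs_lt.2 hs).trans_le (min_le_right _ _))
      have b1 := hΦ _ (hψU t ht) s hs'
      have b2 := hΦ _ (hψU _ hth) s hs'
      have b3 := (b2.sub b1).const_smul h⁻¹
      have e : extG X (Φ s (ψ t), h, h⁻¹ • (Φ s (ψ (t + h)) - Φ s (ψ t))) =
          (X (Φ s (ψ t)), 0, h⁻¹ • (X (Φ s (ψ (t + h))) - X (Φ s (ψ t)))) := by
        refine Prod.ext rfl (Prod.ext rfl ?_)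
        have := extG_smul hX (Φ s (ψ t)) h (h⁻¹ • (Φ s (ψ (t + h)) - Φ s (ψ t)))
        rw [smul_inv_smul₀ hh, add_sub_cancel] at this
        rw [← this, inv_smul_smul₀ hh]
      rw [e]
      exact b1.prodMk ((hasDerivAt_const s h).prodMk b3)
    · rw [a0, hΦ0 _ (hψU t ht), hΦ0 _ (hψU _ hth)]
  set ζ : ℝ → E × ℝ × E := fun t => (ψ t, 0, Y (ψ t)) with hζ
  have hζ0 : ζ 0 = z₀ := by simp [hζ, hz₀, hψ0]
  have hYd : HasFDerivAt Y (fderiv ℝ Y x₀) (ψ 0) := by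
    rw [hψ0]; exact (hY x₀).hasFDerivAt
  have hζ' : HasDerivAt ζ (Y x₀, 0, fderiv ℝ Y x₀ (Y x₀)) 0 :=
    hψ'0.prodMk ((hasDerivAt_const _ _).prodMk (hYd.comp_hasDerivAt 0 hψ'0))
  have hev : ∀ᶠ t in nhds (0:ℝ), ζ t ∈ Metric.ball z₀ r ∧ |ρ * t| < min η δ ∧ |t| < δ := by
    refine Filter.Eventually.and ?_ (Filter.Eventually.and ?_ ?_)
    · apply hζ'.continuousAt.eventually_mem
      rw [hζ0]; exact Metric.ball_mem_nhds _ hr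
    · have : ContinuousAt (fun t : ℝ => |ρ * t|) 0 := by fun_prop
      apply this.eventually_lt continuousAt_const
      simpa using ⟨hη, hδ⟩
    · have : ContinuousAt (fun t : ℝ => |t|) 0 := by fun_prop
      apply this.eventually_lt continuousAt_const
      simpa using hδ
  obtain ⟨ε, hε, hεε⟩ := Metric.eventually_nhds_iff.1 hev
  refine ⟨ε, hε, fun t => (α (ζ t, ρ * t)).2.2, ?_, ?_, ?_⟩
  · intro t ht
    obtain ⟨c1, c2, c3⟩ := hεε (y := t) (by simpa using abs_lt.2 ht)
    have htδ : t ∈ Ioo (-δ) δ := abs_lt.1 c3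
    have hρt : ρ * t ∈ Ioo (-η) η := abs_lt.1 (c2.trans_le (min_le_left _ _))
    have hρtδ : ρ * t ∈ Ioo (-δ) δ := abs_lt.1 (c2.trans_le (min_le_right _ _))
    rw [hasDerivAt_iff_tendsto_slope_zero]
    have hψt := (hasDerivAt_iff_tendsto_slope_zero.1 (hψ t htδ))
    have hid : Tendsto (fun h : ℝ => h) (nhdsWithin 0 {0}ᶜ) (nhds 0) :=
      tendsto_id.mono_left nhdsWithin_le_nhds
    have hξ : Tendsto (fun h : ℝ => ((ψ t, h, h⁻¹ • (ψ (t + h) - ψ t)) : E × ℝ × E))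
        (nhdsWithin 0 {0}ᶜ) (nhds (ζ t)) :=
      tendsto_const_nhds.prodMk_nhds (hid.prodMk_nhds hψt)
    have hth : Tendsto (fun h : ℝ => ρ * (t + h)) (nhdsWithin 0 {0}ᶜ) (nhds (ρ * t)) := by
      have : Tendsto (fun h : ℝ => ρ * (t + h)) (nhds 0) (nhds (ρ * (t + 0))) :=
        Continuous.tendsto (by fun_prop) 0
      rw [add_zero] at this
      exact this.mono_left nhdsWithin_le_nhds
    have hth' : Tendsto (fun h : ℝ => t + h) (nhdsWithin 0 {0}ᶜ) (nhds t) := by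
      have : Tendsto (fun h : ℝ => t + h) (nhds 0) (nhds (t + 0)) :=
        Continuous.tendsto (by fun_prop) 0
      rw [add_zero] at this
      exact this.mono_left nhdsWithin_le_nhds
    have hαlim := (hc _ c1 _ hρt).tendsto.comp (hξ.prodMk_nhds hth)
    have hlim1 := (continuous_snd.comp continuous_snd).continuousAt.tendsto.comp hαlim
    have hΦd : HasDerivAt (fun s => Φ (ρ * s) (ψ t)) (ρ • X (Φ (ρ * t) (ψ t))) t := by
      have h1 : HasDerivAt (fun s : ℝ => ρ * s) ρ t := by
        simpa using (hasDerivAt_id t).const_mul ρ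
      exact (hΦ _ (hψU t htδ) _ hρtδ).scomp t h1
    have hlim2 := hasDerivAt_iff_tendsto_slope_zero.1 hΦd
    refine (hlim2.add hlim1).congr' ?_
    filter_upwards [hξ.eventually_mem (Metric.isOpen_ball.mem_nhds c1),
      hth.eventually_mem (isOpen_Ioo.mem_nhds (abs_lt.1 c2)),
      hth'.eventually_mem (isOpen_Ioo.mem_nhds htδ), self_mem_nhdsWithin] with h d1 d2 d3 d4
    have := hrep t htδ h d4 d3 d1 _ d2
    simp only [Function.comp_apply, this]
    rw [← smul_add]
    congr 1
    abel
  · simp only [mul_zero, hζ0]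
    rw [(hα z₀ (Metric.mem_ball_self hr)).1]
  · have h1 := flow_deriv_zero hG.continuous hr hη hα hc (ρ := ρ) hζ0 hζ'
    have h2 : HasDerivAt (fun t => (α (ζ t, ρ * t)).2.2)
        (ρ • extG X z₀ + (Y x₀, 0, fderiv ℝ Y x₀ (Y x₀))).2.2 0 := by
      have hl := ((ContinuousLinearMap.snd ℝ ℝ E).comp
        (ContinuousLinearMap.snd ℝ E (ℝ × E))).hasFDerivAt (x := α (ζ 0, ρ * 0))
      exact hl.comp_hasDerivAt (f := fun t => α (ζ t, ρ * t)) 0 h1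
    have e : (ρ • extG X z₀ + (Y x₀, 0, fderiv ℝ Y x₀ (Y x₀))).2.2 =
        ρ • fderiv ℝ X x₀ (Y x₀) + fderiv ℝ Y x₀ (Y x₀) := by
      simp [extG, hz₀]
    rw [← e]
    exact h2

end helpers

/-- With `X = f + u₁g`, `Y = f + u₂g`, `A₀ = ρX + Y`, `A₁ = [Y,X]`
and `m(t) = V(X_{ρt}(Y_t(x₀)))`, `m` is twice differentiable at `0` and
`m″(0) = (A₀²V)(x₀) + ρ(A₁V)(x₀)`. -/
theorem stmt10 {n : ℕ} (f g : VF n) (V : Euc n → ℝ)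
    (hf : ContDiff ℝ (⊤ : ℕ∞) f) (hg : ContDiff ℝ (⊤ : ℕ∞) g) (hV : ContDiff ℝ (⊤ : ℕ∞) V)
    (u₁ u₂ ρ : ℝ) (hρ : 0 < ρ) (x₀ : Euc n)
    (Φ : ℝ → Euc n → Euc n) (ψ : ℝ → Euc n) (δ : ℝ) (hδ : 0 < δ)
    (U : Set (Euc n)) (hU : U ∈ nhds x₀)
    (hΦ0 : ∀ z ∈ U, Φ 0 z = z)
    (hΦ : ∀ z ∈ U, ∀ t ∈ Ioo (-δ) δ,
      HasDerivAt (fun s => Φ s z) (f (Φ t z) + u₁ • g (Φ t z)) t)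
    (hψ0 : ψ 0 = x₀)
    (hψ : ∀ t ∈ Ioo (-δ) δ, HasDerivAt ψ (f (ψ t) + u₂ • g (ψ t)) t)
    (hψU : ∀ t ∈ Ioo (-δ) δ, ψ t ∈ U) :
    ∃ ε : ℝ, 0 < ε ∧ ∃ m1 : ℝ → ℝ,
      (∀ t ∈ Ioo (-ε) ε, HasDerivAt (fun s => V (Φ (ρ * s) (ψ s))) (m1 t) t) ∧
      HasDerivAt m1
        (vfD (fun x => ρ • (f x + u₁ • g x) + (f x + u₂ • g x))
            (vfD (fun x => ρ • (f x + u₁ • g x) + (f x + u₂ • g x)) V) x₀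
          + ρ * vfD (lieB (fun x => f x + u₂ • g x) (fun x => f x + u₁ • g x)) V x₀)
        0 := by 
  set X : VF n := fun x => f x + u₁ • g x with hXdef
  set Y : VF n := fun x => f x + u₂ • g x with hYdef
  have hX : ContDiff ℝ (⊤ : ℕ∞) X := hf.add (hg.const_smul u₁)
  have hY : ContDiff ℝ (⊤ : ℕ∞) Y := hf.add (hg.const_smul u₂)
  have hX2 : ContDiff ℝ 2 X := hX.of_le (WithTop.coe_le_coe.2 (le_top : (2 : ℕ∞) ≤ ⊤))
  have hXd : Differentiable ℝ X := hX2.differentiable (by norm_num)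
  have hYd : Differentiable ℝ Y := hY.differentiable (by simp)
  have hV2 : ContDiff ℝ 2 V := hV.of_le (WithTop.coe_le_coe.2 (le_top : (2 : ℕ∞) ≤ ⊤))
  have hVd : Differentiable ℝ V := hV2.differentiable (by norm_num)
  have hV1 : Differentiable ℝ (fderiv ℝ V) :=
    (hV2.fderiv_right (m := 1) (by norm_num)).differentiable (by norm_num)
  obtain ⟨ε, hε, Q, hw, hQ0, hQ⟩ := curve_deriv hX2 hYd ρ x₀ Φ ψ δ hδ U hΦ0 hΦ hψ0 hψ hψU
  refine ⟨ε, hε, fun t => fderiv ℝ V (Φ (ρ * t) (ψ t)) (ρ • X (Φ (ρ * t) (ψ t)) + Q t), ?_, ?_⟩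
  · intro t ht
    exact (hVd _).hasFDerivAt.comp_hasDerivAt t (hw t ht)
  · have hw0 : Φ (ρ * 0) (ψ 0) = x₀ := by
      rw [mul_zero, hψ0]; exact hΦ0 _ (mem_of_mem_nhds hU)
    have hwd : HasDerivAt (fun s => Φ (ρ * s) (ψ s)) (ρ • X x₀ + Y x₀) 0 := by
      have := hw 0 ⟨by linarith, hε⟩
      rwa [hw0, hQ0] at this
    have d1 : HasDerivAt (fun s => fderiv ℝ V (Φ (ρ * s) (ψ s)))
        (fderiv ℝ (fderiv ℝ V) x₀ (ρ • X x₀ + Y x₀)) 0 := by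
      refine HasFDerivAt.comp_hasDerivAt (f := fun s => Φ (ρ * s) (ψ s)) 0 ?_ hwd
      rw [hw0]; exact (hV1 x₀).hasFDerivAt
    have d2 : HasDerivAt (fun s => X (Φ (ρ * s) (ψ s)))
        (fderiv ℝ X x₀ (ρ • X x₀ + Y x₀)) 0 := by
      have hx : HasFDerivAt X (fderiv ℝ X x₀) (Φ (ρ * 0) (ψ 0)) := by
        rw [hw0]; exact (hXd x₀).hasFDerivAt
      exact hx.comp_hasDerivAt (f := fun s => Φ (ρ * s) (ψ s)) 0 hwd
    have d3 := d1.clm_apply ((d2.const_smul ρ).add hQ)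
    have hA : HasFDerivAt (fun x => ρ • X x + Y x) (ρ • fderiv ℝ X x₀ + fderiv ℝ Y x₀) x₀ :=
      ((hXd x₀).hasFDerivAt.const_smul ρ).add (hYd x₀).hasFDerivAt
    have hAV := ((hV1 x₀).hasFDerivAt.clm_apply hA).fderiv
    have e : vfD (fun x => ρ • X x + Y x) (vfD (fun x => ρ • X x + Y x) V) x₀ =
        fderiv ℝ (fun x => fderiv ℝ V x (ρ • X x + Y x)) x₀ (ρ • X x₀ + Y x₀) := rfl
    refine HasDerivAt.congr_deriv d3 ?_
    rw [e, hAV]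
    simp only [vfD, lieB, hw0, hQ0, Pi.add_apply, Pi.smul_apply]
    simp [map_add, map_sub, mul_add, mul_sub]
    ring
end
end

section
/- Let f,g:ℝⁿ→ℝⁿ be smooth vector fields with f(0)=0, V:ℝⁿ→ℝ⁺ smooth, x₀≠0, and suppose there exists an integer N≥1 such that (gV)(x₀)=0, (fⁱV)(x₀)=0 for i=1,…,N, (Δ₁Δ₂⋯Δ_kV)(x₀)=0 for all Δ₁,…,Δ_k ∈ Lie{f,g}∖{g} with Σ_{p=1}^{k} order_{{f,g}}Δ_p ≤ N, and one of the following holds: (P1) (f^{N+1}V)(x₀)<0; (P2) N is odd and ([[…[[f,g],g],…,g],g]V)(x₀)≠0 (N iterated brackets with g); (P3) N is even and ([[…[[f,g],g],…,g],g]V)(x₀)<0 (N iterated brackets with g); (P4) (f^{N+1}V)(x₀)=0 and ([[…[[g,f],f],…,f],f]V)(x₀)≠0 (N iterated brackets with f). Then there exist constants ρ=ρ(x₀)>0, u₁=u₁(x₀)∈ℝ and σ=σ(x₀)>0 such that, setting X:=f+u₁g and Y:=f−ρu₁g, the composition of flows satisfies V(X_{ρt}(Y_t(x₀))) < V(x₀)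 for every t∈(0,σ]. -/
open MeasureTheory Filter Set

noncomputable section

section Alg
variable {A : Type*} [Ring A] [Algebra ℝ A]

open Polynomial

/-- `Zs B C m = ∑ binom(m,k) B^{m-k} C^k`, defined recursively. -/
def Zs {R : Type*} [Ring R] (B C : R) : ℕ → R
  | 0 => 1
  | m + 1 => B * Zs B C m + Zs B C m * C

lemma Zs_eq (B C : A) (m : ℕ) :
    Zs B C m = ∑ k ∈ Finset.range (m + 1), (m.choose k : ℝ) • (B ^ (m - k) * C ^ k) := by
  have h1 : ∀ m, Zs B C m = ((LinearMap.mulRight ℝ C + LinearMap.mulLeft ℝ B) ^ m) 1 := by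
    intro m
    induction m with
    | zero => simp [Zs]
    | succ m ih =>
      rw [pow_succ', Module.End.mul_apply, ← ih]
      simp [Zs, add_comm]
  have hc : Commute (LinearMap.mulRight ℝ C) (LinearMap.mulLeft ℝ B) :=
    (LinearMap.commute_mulLeft_right B C).symm
  rw [h1, hc.add_pow, LinearMap.sum_apply]
  refine Finset.sum_congr rfl fun k _ => ?_
  rw [(Nat.cast_commute _ _).eq.symm, ← nsmul_eq_mul, LinearMap.smul_apply, Module.End.mul_apply,
    LinearMap.pow_mulLeft, LinearMap.pow_mulRight, Nat.cast_smul_eq_nsmul]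
  simp

/-- iterated right commutators -/
def adR {R : Type*} [Ring R] (F G : R) : ℕ → R
  | 0 => F
  | k + 1 => adR F G k * G - G * adR F G k

lemma Zs_map {R S : Type*} [Ring R] [Ring S] (φ : R →+* S) (B C : R) (m : ℕ) :
    φ (Zs B C m) = Zs (φ B) (φ C) m := by
  induction m with
  | zero => simp [Zs]
  | succ m ih => simp [Zs, ih]

/-- evaluation at a real number -/
def evR (u : ℝ) : A[X] →+* A :=
  eval₂RingHom' (RingHom.id A) (algebraMap ℝ A u) (fun a => (Algebra.commutes u a).symm)

lemma evR_C (u : ℝ) (a : A) : evR u (C a) = a := by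
  simp [evR, eval₂RingHom']
lemma evR_X (u : ℝ) : evR u (X : A[X]) = algebraMap ℝ A u := by
  simp [evR, eval₂RingHom']

/-- coefficientwise image under a linear functional -/
noncomputable def coP (l : A →ₗ[ℝ] ℝ) (p : A[X]) : ℝ[X] :=
  ∑ i ∈ Finset.range (p.natDegree + 1), monomial i (l (p.coeff i))

lemma coP_coeff (l : A →ₗ[ℝ] ℝ) (p : A[X]) (i : ℕ) : (coP l p).coeff i = l (p.coeff i) := by
  simp only [coP, finsetSum_coeff, coeff_monomial, Finset.sum_ite_eq', Finset.mem_range]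
  split_ifs with h
  · rfl
  · rw [coeff_eq_zero_of_natDegree_lt (by omega), map_zero]

lemma coP_eval (l : A →ₗ[ℝ] ℝ) (p : A[X]) (u : ℝ) : (coP l p).eval u = l (evR u p) := by
  have : evR u p = ∑ i ∈ Finset.range (p.natDegree + 1), u ^ i • p.coeff i := by
    simp only [evR, eval₂RingHom', RingHom.coe_mk, MonoidHom.coe_mk, OneHom.coe_mk, eval₂_eq_sum_range]
    refine Finset.sum_congr rfl fun i _ => ?_
    rw [← map_pow, Algebra.smul_def, Algebra.commutes]; rfl
  rw [this, coP, eval_finsetSum, map_sum]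
  refine Finset.sum_congr rfl fun i _ => ?_
  simp [mul_comm]

/-- the polynomial (in `u`) version of `Z` -/
noncomputable def ZP (F G : A) (ρ : ℝ) (m : ℕ) : A[X] :=
  Zs (C F - X * C (ρ • G)) (C (ρ • F) + X * C (ρ • G)) m

lemma evR_ZP (F G : A) (ρ u : ℝ) (m : ℕ) :
    evR u (ZP F G ρ m) = Zs (F - (ρ * u) • G) (ρ • (F + u • G)) m := by
  rw [ZP, Zs_map]
  congr 1
  · simp [evR_C, evR_X, ← Algebra.commutes u G]
    rw [← Algebra.smul_def, smul_smul]
  · simp [evR_C, evR_X, ← Algebra.commutes u G]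
    rw [← Algebra.smul_def, smul_smul]

lemma ZP_succ (F G : A) (ρ : ℝ) (m : ℕ) :
    ZP F G ρ (m+1) = C F * ZP F G ρ m - X * (C (ρ • G) * ZP F G ρ m)
      + (ZP F G ρ m * C (ρ • F) + X * (ZP F G ρ m * C (ρ • G))) := by
  have h : ZP F G ρ m * X = X * ZP F G ρ m := (X_mul).symm
  conv_lhs => rw [ZP, Zs]
  rw [← ZP, sub_mul, mul_add, mul_assoc, ← mul_assoc _ X, h, mul_assoc]

lemma ZP_top (F G : A) (m : ℕ) :
    (∀ i, m < i → (ZP F G 1 (m+1)).coeff i = 0) ∧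
      (ZP F G 1 (m+1)).coeff m = (2:ℝ) • adR F G m := by
  induction m with
  | zero =>
    have : ZP F G 1 1 = C ((2:ℝ) • F) := by
      rw [ZP_succ]; simp [ZP, Zs, two_smul]
    constructor
    · intro i hi
      rw [zero_add, this, coeff_C, if_neg (by omega)]
    · rw [zero_add, this]; simp [adR]
  | succ m ih =>
    obtain ⟨h1, h2⟩ := ih
    constructor
    · intro i hi
      obtain ⟨i, rfl⟩ : ∃ j, i = j + 1 := ⟨i - 1, by omega⟩
      rw [ZP_succ]
      simp only [coeff_add, coeff_sub, coeff_C_mul, coeff_mul_C, coeff_X_mul]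
      rw [h1 _ (by omega), h1 _ (by omega)]; simp
    · rw [ZP_succ]
      simp only [coeff_add, coeff_sub, coeff_C_mul, coeff_mul_C, coeff_X_mul]
      rw [h1 _ (by omega), h2]
      simp [adR, smul_sub]; abel

/-- the polynomial (in `r = 1 + ρ`) giving the linear coefficient in `u`. -/
noncomputable def DP (F G : A) : ℕ → A[X]
  | 0 => 0
  | m + 1 => C F * DP F G m + (X * (DP F G m * C F) - DP F G m * C F)
      + (X - 1) * (X ^ m * C (F ^ m * G - G * F ^ m))

lemma ZP_low (F G : A) (r : ℝ) (m : ℕ) :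
    (ZP F G (r - 1) m).coeff 0 = r ^ m • F ^ m ∧
    (ZP F G (r - 1) m).coeff 1 = evR r (DP F G m) := by
  induction m with
  | zero => simp [ZP, Zs, DP, coeff_one]
  | succ m ih =>
    obtain ⟨h1, h2⟩ := ih
    rw [ZP_succ]
    constructor
    · simp only [coeff_add, coeff_sub, coeff_C_mul, coeff_mul_C, coeff_X_mul_zero, h1]
      rw [mul_smul_comm, smul_mul_assoc, mul_smul_comm, ← pow_succ', ← pow_succ, smul_smul]
      simp only [sub_zero, add_zero]
      rw [← add_smul]; congr 1; ring
    · have cX : ∀ p : A[X], (X * p).coeff 1 = p.coeff 0 := fun p => coeff_X_mul p 0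
      simp only [coeff_add, coeff_sub, coeff_C_mul, coeff_mul_C, cX, h1, h2]
      simp only [DP, map_add, map_sub, map_mul, map_pow, map_one, evR_C, evR_X]
      simp only [← map_pow, ← Algebra.smul_def, sub_mul, one_mul, smul_sub, mul_sub, sub_smul, one_smul,
        smul_mul_assoc, mul_smul_comm, smul_add, smul_smul]
      have e : r ^ m * r = r * r ^ m := mul_comm _ _
      simp only [e]
      abel

lemma DP_low (F G : A) (m : ℕ) :
    (DP F G (m+1)).coeff 0 = 0 ∧ (1 ≤ m → (DP F G (m+1)).coeff 1 = (-1:ℝ)^(m+1) • adR G F m) := by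
  induction m with
  | zero => simp [DP]
  | succ m ih =>
    obtain ⟨h1, h2⟩ := ih
    rw [DP]
    constructor
    · simp [h1, sub_mul, pow_succ', mul_assoc]
    · intro _
      have cX : ∀ p : A[X], (X * p).coeff 1 = p.coeff 0 := fun p => coeff_X_mul p 0
      simp only [coeff_add, coeff_sub, coeff_C_mul, coeff_mul_C, sub_mul, one_mul,
        cX, h1, pow_succ' X, mul_assoc, coeff_X_mul_zero]
      rcases Nat.eq_zero_or_pos m with rfl | hm
      · simp [DP, adR]
      · obtain ⟨k, rfl⟩ : ∃ j, m = j + 1 := ⟨m - 1, by omega⟩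
        simp only [pow_succ' X, mul_assoc, coeff_X_mul_zero]
        rw [h2 hm]
        have e : adR G F (k + 1 + 1) = adR G F (k + 1) * F - F * adR G F (k + 1) := rfl
        rw [e]
        generalize adR G F (k + 1) = a
        simp [pow_succ, smul_sub]
        abel
end Alg

open Polynomial in
lemma exists_neg_of_lin (q : ℝ[X]) (h0 : q.coeff 0 = 0) (h1 : q.coeff 1 ≠ 0) : ∃ u, q.eval u < 0 := by
  by_contra! h
  have hm : IsLocalMin (fun x => q.eval x) 0 := by
    refine Filter.Eventually.of_forall fun x => ?_
    simpa [← coeff_zero_eq_eval_zero, h0] using h x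
  have := hm.deriv_eq_zero
  rw [Polynomial.deriv, ← coeff_zero_eq_eval_zero, coeff_derivative] at this
  simp at this
  exact h1 this

open Polynomial in
lemma exists_neg_of_top_neg (q : ℝ[X]) (N : ℕ) (hN : 1 ≤ N) (hd : ∀ i, N < i → q.coeff i = 0)
    (h : q.coeff N < 0) : ∃ u, q.eval u < 0 := by
  have hdeg : q.natDegree = N :=
    natDegree_eq_of_le_of_coeff_ne_zero (natDegree_le_iff_coeff_eq_zero.2 hd) h.ne
  have ht := q.tendsto_atBot_of_leadingCoeff_nonpos
    (natDegree_pos_iff_degree_pos.1 (by omega)) (by rw [leadingCoeff, hdeg]; exact h.le)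
  exact (ht.eventually (eventually_lt_atBot 0)).exists

open Polynomial in
lemma comp_neg_X_coeff' (q : ℝ[X]) (i : ℕ) : (q.comp (-X)).coeff i = (-1) ^ i * q.coeff i := by
  have : (-X : ℝ[X]) = C (-1) * X := by simp
  rw [this, comp_C_mul_X_coeff, mul_comm]

open Polynomial in
lemma exists_neg_of_top_odd (q : ℝ[X]) (N : ℕ) (hN : Odd N) (hd : ∀ i, N < i → q.coeff i = 0)
    (h : q.coeff N ≠ 0) : ∃ u, q.eval u < 0 := by
  rcases lt_or_gt_of_ne h with h | h
  · exact exists_neg_of_top_neg q N hN.pos hd h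
  · obtain ⟨u, hu⟩ := exists_neg_of_top_neg (q.comp (-X)) N hN.pos
      (fun i hi => by rw [comp_neg_X_coeff', hd i hi]; simp)
      (by rw [comp_neg_X_coeff', hN.neg_one_pow]; simpa using h)
    exact ⟨-u, by simpa using hu⟩

open Polynomial in
lemma exists_gt_of_coeff (q : ℝ[X]) (h1 : q.coeff 1 ≠ 0) : ∃ r, 1 < r ∧ q.eval r ≠ 0 := by
  by_contra! h
  have : q = 0 := eq_zero_of_infinite_isRoot q
    ((Set.Ioi_infinite (1:ℝ)).mono fun x hx => h x hx)
  simp [this] at h1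

/-- algebraic core -/
lemma alg_core {A : Type*} [Ring A] [Algebra ℝ A] (F G : A) (l : A →ₗ[ℝ] ℝ) (N : ℕ) (hN : 1 ≤ N)
    (hP : l (F ^ (N+1)) < 0 ∨ (Odd N ∧ l (adR F G N) ≠ 0) ∨ (Even N ∧ l (adR F G N) < 0) ∨
      (l (F ^ (N+1)) = 0 ∧ l (adR G F N) ≠ 0)) :
    ∃ ρ : ℝ, 0 < ρ ∧ ∃ u : ℝ, l (Zs (F - (ρ * u) • G) (ρ • (F + u • G)) (N+1)) < 0 := by
  simp only [← evR_ZP, ← coP_eval]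
  rcases hP with h | ⟨ho, h⟩ | ⟨ho, h⟩ | ⟨h0, h⟩
  · refine ⟨1, one_pos, 0, ?_⟩
    have := (ZP_low F G 2 (N+1)).1
    rw [← Polynomial.coeff_zero_eq_eval_zero, coP_coeff]
    norm_num at this
    rw [this, map_smul]
    exact mul_neg_of_pos_of_neg (by positivity) h
  · obtain ⟨ht, hc⟩ := ZP_top F G N
    exact ⟨1, one_pos, exists_neg_of_top_odd _ N ho (fun i hi => by rw [coP_coeff, ht i hi, map_zero])
      (by rw [coP_coeff, hc, map_smul]; simpa using h)⟩
  · obtain ⟨ht, hc⟩ := ZP_top F G N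
    exact ⟨1, one_pos, exists_neg_of_top_neg _ N hN (fun i hi => by rw [coP_coeff, ht i hi, map_zero])
      (by rw [coP_coeff, hc, map_smul]; simp only [smul_eq_mul]; linarith)⟩
  · obtain ⟨r, hr, hr'⟩ := exists_gt_of_coeff (coP l (DP F G (N+1))) (by
      rw [coP_coeff, (DP_low F G N).2 hN, map_smul]
      exact smul_ne_zero (by simp) h)
    refine ⟨r - 1, by linarith, ?_⟩
    obtain ⟨z0, z1⟩ := ZP_low F G r (N+1)
    apply exists_neg_of_lin
    · rw [coP_coeff, z0, map_smul, h0, smul_zero]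
    · rw [coP_coeff, z1, ← coP_eval]; exact hr'

lemma confine {n : ℕ} (X : VF n) (hX : ContDiff ℝ (⊤ : ℕ∞) X) (x₀ : Euc n) (δ : ℝ) (hδ : 0 < δ) :
    ∃ T, 0 < T ∧ T < δ ∧ ∀ γ : ℝ → Euc n,
      (∀ t ∈ Ioo (-δ) δ, HasDerivAt γ (X (γ t)) t) → ‖γ 0 - x₀‖ ≤ 1 / 2 →
      ∀ s ∈ Icc 0 T, γ s ∈ Metric.closedBall x₀ 1 := by
  obtain ⟨K, hK⟩ := (isCompact_closedBall x₀ (1:ℝ)).exists_bound_of_continuousOn hX.continuous.continuousOn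
  have hK0 : 0 ≤ K := (norm_nonneg _).trans (hK x₀ (Metric.mem_closedBall_self zero_le_one))
  refine ⟨min (δ / 2) (1 / (2 * (K + 1))), by positivity, (min_le_left _ _).trans_lt (by linarith), ?_⟩
  intro γ hγ h0 s hs
  have hT : ∀ x, x ≤ min (δ / 2) (1 / (2 * (K + 1))) → x < δ ∧ (K + 1) * x ≤ 1 / 2 := by
    intro x hx
    refine ⟨(hx.trans (min_le_left _ _)).trans_lt (by linarith), ?_⟩
    have := hx.trans (min_le_right _ _)
    rw [le_div_iff₀ (by positivity)] at this
    linarith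
  have hd : ∀ x ∈ Icc 0 (min (δ / 2) (1 / (2 * (K + 1)))),
      HasDerivAt (fun s => γ s - γ 0) (X (γ x)) x := fun x hx =>
    (hγ x ⟨by linarith [hx.1], (hT x hx.2).1⟩).sub_const _
  have key : ∀ x, (K + 1) * x ≤ 1 / 2 → ‖γ x - γ 0‖ ≤ (K + 1) * x → γ x ∈ Metric.closedBall x₀ 1 := by
    intro x h1 h2
    rw [mem_closedBall_iff_norm]
    calc ‖γ x - x₀‖ = ‖(γ x - γ 0) + (γ 0 - x₀)‖ := by congr 1; abel
      _ ≤ _ := norm_add_le _ _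
      _ ≤ 1 := by linarith
  refine key s (hT s hs.2).2 ?_
  refine image_norm_le_of_norm_deriv_right_lt_deriv_boundary (f := fun s => γ s - γ 0)
    (f' := fun x => X (γ x)) (B := fun x => (K + 1) * x) (B' := fun _ => K + 1)
    (fun x hx => (hd x hx).continuousAt.continuousWithinAt)
    (fun x hx => (hd x ⟨hx.1, hx.2.le⟩).hasDerivWithinAt) (by simp)
    (fun x => by simpa using (hasDerivAt_id x).const_mul (K + 1)) ?_ hs
  intro x hx he
  have := hK _ (key x (hT x hx.2.le).2 he.le)
  linarith

/-- smooth functions -/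
def Sm (n : ℕ) : Submodule ℝ (Euc n → ℝ) where
  carrier := {W | ContDiff ℝ (⊤ : ℕ∞) W}
  add_mem' := by
    intro a b h1 h2
    exact ContDiff.add (mem_ofPred_eq ▸ h1) (mem_ofPred_eq ▸ h2)
  zero_mem' := by
    change ContDiff ℝ (⊤ : ℕ∞) (fun _ => (0:ℝ))
    exact contDiff_const
  smul_mem' := by
    intro c a h
    exact ContDiff.const_smul c (mem_ofPred_eq ▸ h)

lemma smC {n : ℕ} (W : Sm n) : ContDiff ℝ (⊤ : ℕ∞) W.1 := W.2

lemma smD {n : ℕ} (W : Sm n) : Differentiable ℝ W.1 := (smC W).differentiable (by simp)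

lemma vfD_smooth {n : ℕ} {X : VF n} (hX : ContDiff ℝ (⊤ : ℕ∞) X) {W : Euc n → ℝ}
    (hW : ContDiff ℝ (⊤ : ℕ∞) W) : ContDiff ℝ (⊤ : ℕ∞) (vfD X W) :=
  (hW.fderiv_right (m := (⊤ : ℕ∞)) (by simp)).clm_apply hX

lemma lieB_smooth {n : ℕ} {X Y : VF n} (hX : ContDiff ℝ (⊤ : ℕ∞) X)
    (hY : ContDiff ℝ (⊤ : ℕ∞) Y) : ContDiff ℝ (⊤ : ℕ∞) (lieB X Y) :=
  ((hY.fderiv_right (m := (⊤ : ℕ∞)) (by simp)).clm_apply hX).sub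
   ((hX.fderiv_right (m := (⊤ : ℕ∞)) (by simp)).clm_apply hY)

/-- a smooth vector field as an operator -/
def op {n : ℕ} (X : VF n) (hX : ContDiff ℝ (⊤ : ℕ∞) X) : Module.End ℝ (Sm n) where
  toFun W := ⟨vfD X W.1, vfD_smooth hX (smC W)⟩
  map_add' W₁ W₂ := by
    ext x
    have := fderiv_add (smD W₁ x) (smD W₂ x)
    simp [vfD, this]
  map_smul' c W := by
    ext x
    have := fderiv_const_smul (smD W x) c
    simp [vfD, this]

lemma op_apply {n : ℕ} (X : VF n) (hX : ContDiff ℝ (⊤ : ℕ∞) X) (W : Sm n) (x : Euc n) :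
    (op X hX W).1 x = fderiv ℝ W.1 x (X x) := rfl

lemma op_lieB {n : ℕ} {X Y : VF n} (hX : ContDiff ℝ (⊤ : ℕ∞) X) (hY : ContDiff ℝ (⊤ : ℕ∞) Y) :
    op (lieB X Y) (lieB_smooth hX hY) = op X hX * op Y hY - op Y hY * op X hX := by
  ext W x
  have hs : IsSymmSndFDerivAt ℝ W.1 x :=
    ((smC W).contDiffAt (x := x)).isSymmSndFDerivAt (by
      simp only [minSmoothness_of_isRCLikeNormedField]
      exact WithTop.coe_le_coe.2 (le_top : (2 : ℕ∞) ≤ ⊤))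
  have hdW : DifferentiableAt ℝ (fderiv ℝ W.1) x :=
    (((smC W).fderiv_right (m := (⊤ : ℕ∞)) (by simp)).differentiable (by simp)) x
  have e1 := fderiv_clm_apply hdW (hX.differentiable (by simp) x)
  have e2 := fderiv_clm_apply hdW (hY.differentiable (by simp) x)
  change fderiv ℝ W.1 x (lieB X Y x) = fderiv ℝ (fun y => fderiv ℝ W.1 y (Y y)) x (X x)
    - fderiv ℝ (fun y => fderiv ℝ W.1 y (X y)) x (Y x)
  rw [e1, e2]
  simp only [lieB, map_sub, _root_.add_apply, ContinuousLinearMap.comp_apply,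
    ContinuousLinearMap.flip_apply]
  rw [hs (X x) (Y x)]
  ring

lemma taylor {n : ℕ} (X : VF n) (hX : ContDiff ℝ (⊤ : ℕ∞) X) (x₀ : Euc n) (δ : ℝ)
    (T : ℝ) (hTδ : T < δ) (P : (ℝ → Euc n) → Prop)
    (hP : ∀ γ, P γ → (∀ t ∈ Ioo (-δ) δ, HasDerivAt γ (X (γ t)) t) ∧
      ∀ s ∈ Icc 0 T, γ s ∈ Metric.closedBall x₀ 1) (m : ℕ) :
    ∀ W : Sm n, ∃ C, ∀ γ, P γ → ∀ s ∈ Icc 0 T,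
      |W.1 (γ s) - ∑ j ∈ Finset.range m, s ^ j / (j.factorial : ℝ) * ((op X hX ^ j) W).1 (γ 0)| ≤ C * s ^ m := by
  induction m with
  | zero =>
    intro W
    obtain ⟨K, hK⟩ := (isCompact_closedBall x₀ (1:ℝ)).exists_bound_of_continuousOn (smC W).continuous.continuousOn
    exact ⟨K, fun γ hγ s hs => by simpa using hK _ ((hP γ hγ).2 s hs)⟩
  | succ m ih =>
    intro W
    obtain ⟨C, hC⟩ := ih (op X hX W)
    refine ⟨C, fun γ hγ s hs => ?_⟩
    obtain ⟨h1, h2⟩ := hP γ hγ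
    set a : ℕ → ℝ := fun j => ((op X hX ^ j) W).1 (γ 0) with ha
    have ha' : ∀ j, ((op X hX ^ j) (op X hX W)).1 (γ 0) = a (j + 1) := by
      intro j; rw [ha]; simp only [pow_succ, Module.End.mul_apply]
    have hder : ∀ x ∈ Icc 0 T, HasDerivAt
        (fun s => W.1 (γ s) - ∑ j ∈ Finset.range (m + 1), s ^ j / (j.factorial : ℝ) * a j)
        ((op X hX W).1 (γ x) - ∑ j ∈ Finset.range m, x ^ j / (j.factorial : ℝ) * a (j + 1)) x := by
      intro x hx
      apply HasDerivAt.sub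
      · exact (smD W (γ x)).hasFDerivAt.comp_hasDerivAt x
          (h1 x ⟨by linarith [hx.1, hx.2], by linarith [hx.2]⟩)
      · simp only [Finset.sum_range_succ']
        have : HasDerivAt (fun s : ℝ => ∑ j ∈ Finset.range m, s ^ (j + 1) / ((j + 1).factorial : ℝ) * a (j + 1))
          (∑ j ∈ Finset.range m, x ^ j / (j.factorial : ℝ) * a (j + 1)) x := by
          apply HasDerivAt.fun_sum
          intro j _
          have := ((hasDerivAt_pow (j + 1) x).div_const ((j + 1).factorial : ℝ)).mul_const (a (j + 1))
          refine this.congr_deriv ?_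
          rw [Nat.factorial_succ]
          push_cast
          have : (j.factorial : ℝ) ≠ 0 := by positivity
          have : (j : ℝ) + 1 ≠ 0 := by positivity
          try simp only [Nat.add_sub_cancel]
          field_simp
        exact (this.add_const (x ^ 0 / ((0:ℕ).factorial : ℝ) * a 0)).congr_of_eventuallyEq
          (Filter.Eventually.of_forall fun y => by simp)
    have := norm_image_sub_le_of_norm_deriv_le_segment' (a := 0) (b := s) (C := C * s ^ m)
      (fun x hx => (hder x ⟨hx.1, hx.2.trans hs.2⟩).hasDerivWithinAt) (by
        intro x hx
        have h := hC γ hγ x ⟨hx.1, hx.2.le.trans hs.2⟩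
        simp only [ha'] at h
        refine h.trans ?_
        by_cases hC0 : 0 ≤ C
        · exact mul_le_mul_of_nonneg_left (pow_le_pow_left₀ hx.1 hx.2.le _) hC0
        · exfalso
          have h' := hC γ hγ s hs
          have hp : 0 < s := hx.1.trans_lt hx.2
          have := (abs_nonneg _).trans h'
          have : C * s ^ m < 0 := mul_neg_of_neg_of_pos (not_le.1 hC0) (by positivity)
          linarith) s ⟨hs.1, le_rfl⟩
    simp only [Finset.sum_range_succ' _ m] at this ⊢
    simp [ha] at this ⊢
    rw [pow_succ, ← mul_assoc]
    exact this

lemma applyVFs_append {n : ℕ} (L L' : List (VF n)) (V : Euc n → ℝ) :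
    applyVFs (L ++ L') V = applyVFs L (applyVFs L' V) := by
  induction L with
  | nil => rfl
  | cons X L ih => simp [applyVFs, ih]

lemma op_pow {n : ℕ} (X : VF n) (hX : ContDiff ℝ (⊤ : ℕ∞) X) (W : Sm n) (i : ℕ) :
    ((op X hX ^ i) W).1 = applyVFs (List.replicate i X) W.1 := by
  induction i with
  | zero => rfl
  | succ i ih =>
    rw [pow_succ', Module.End.mul_apply, List.replicate_succ, applyVFs, ← ih]; rfl

lemma iterD_eq {n : ℕ} (X : VF n) (V : Euc n → ℝ) (i : ℕ) :
    iterD X V i = applyVFs (List.replicate i X) V := by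
  induction i with
  | zero => rfl
  | succ i ih => rw [List.replicate_succ, applyVFs, ← ih]; rfl

lemma op_adIter {n : ℕ} {f g : VF n} (hf : ContDiff ℝ (⊤ : ℕ∞) f) (hg : ContDiff ℝ (⊤ : ℕ∞) g) (k : ℕ) :
    ∃ h, op (adIter f g k) h = adR (op f hf) (op g hg) k := by
  induction k with
  | zero => exact ⟨hf, rfl⟩
  | succ k ih =>
    obtain ⟨h, e⟩ := ih
    exact ⟨lieB_smooth h hg, by rw [adR, ← e]; exact op_lieB h hg⟩

/-- auxiliary scaling factor -/
def scl {n : ℕ} (g X : VF n) : ℝ := by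
  classical exact if (2:ℝ) • X = g then 3 else 2

lemma scl_ne {n : ℕ} (g X : VF n) : scl g X ≠ 0 := by
  unfold scl; split_ifs <;> norm_num

lemma scl_smul {n : ℕ} (g X : VF n) (hX : X ≠ 0) : scl g X • X ≠ g := by
  unfold scl
  split_ifs with h
  · intro h3
    apply hX
    have : (3:ℝ) • X - (2:ℝ) • X = 0 := by rw [h, h3, sub_self]
    rw [← sub_smul] at this
    norm_num at this
    exact this
  · exact h

lemma applyVFs_scl {n : ℕ} (g : VF n) (L : List (VF n)) (V : Euc n → ℝ) :
    ∃ c : ℝ, c ≠ 0 ∧ applyVFs (L.map fun X => scl g X • X) V = c • applyVFs L V := by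
  induction L with
  | nil => exact ⟨1, one_ne_zero, by simp [applyVFs]⟩
  | cons X L ih =>
    obtain ⟨c, hc, e⟩ := ih
    refine ⟨scl g X * c, mul_ne_zero (scl_ne g X) hc, ?_⟩
    rw [List.map_cons, applyVFs, e]
    funext x
    simp only [vfD, applyVFs, fderiv_const_smul_field, Pi.smul_apply, map_smul, smul_eq_mul]
    simp [mul_assoc]

lemma applyVFs_zero {n : ℕ} (L : List (VF n)) (V : Euc n → ℝ) (h : 0 ∈ L) : applyVFs L V = 0 := by
  induction L with
  | nil => simp at h
  | cons X L ih =>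
    rcases List.mem_cons.1 h with h | h
    · subst h; funext x; simp [applyVFs, vfD]
    · funext x; simp [applyVFs, ih h, vfD]

lemma words {n : ℕ} {f g : VF n} {V : Euc n → ℝ} {x₀ : Euc n} {N : ℕ}
    (hLie : LieCondZero f g V x₀ N) (L : List (VF n))
    (hL : ∀ X ∈ L, X ∈ Submodule.span ℝ ({f, g} : Set (VF n))) (h0 : L ≠ []) (hN : L.length ≤ N) :
    applyVFs L V x₀ = 0 := by
  by_cases hz : (0 : VF n) ∈ L
  · rw [applyVFs_zero L V hz]; rfl
  obtain ⟨c, hc, e⟩ := applyVFs_scl g L V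
  have := hLie (L.map fun X => scl g X • X) (List.replicate L.length 1) (by simpa using h0) (by simp)
    (by
      rintro ⟨p, o⟩ hp
      have h1 := (List.of_mem_zip hp).1
      have h2 := List.eq_of_mem_replicate (List.of_mem_zip hp).2
      simp only at h1 h2 ⊢
      subst h2
      obtain ⟨X, hX, rfl⟩ := List.mem_map.1 h1
      have hX0 : X ≠ 0 := fun h => hz (h ▸ hX)
      have hm : scl g X • X ∈ Lk f g 0 := Submodule.smul_mem _ _ (hL X hX)
      exact ⟨Submodule.mem_iSup_of_mem 0 hm, scl_smul g X hX0, hm, smul_ne_zero (scl_ne g X) hX0⟩)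
    (by simpa using hN)
  rw [e] at this
  simpa [hc] using this

/-- Under the Lie algebraic vanishing conditions up to order `N`
at `x₀` together with one of the properties (P1)–(P4), there exist constants
`ρ > 0`, `u₁` and `σ > 0` such that `V(X_{ρt}(Y_t(x₀))) < V(x₀)` for `t ∈ (0,σ]`,
where `X = f + u₁g` and `Y = f − ρu₁g`. -/
theorem stmt13 {n : ℕ} (f g : VF n) (V : Euc n → ℝ)
    (hf : ContDiff ℝ (⊤ : ℕ∞) f) (hg : ContDiff ℝ (⊤ : ℕ∞) g) (hf0 : f 0 = 0)
    (hV : ContDiff ℝ (⊤ : ℕ∞) V) (hVnn : ∀ x : Euc n, 0 ≤ V x)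
    (x₀ : Euc n) (hx₀ : x₀ ≠ 0) (N : ℕ) (hN : 1 ≤ N)
    (hgV : vfD g V x₀ = 0)
    (hfVi : ∀ i : ℕ, 1 ≤ i → i ≤ N → iterD f V i x₀ = 0)
    (hLie : LieCondZero f g V x₀ N)
    (hP : iterD f V (N + 1) x₀ < 0 ∨
          (Odd N ∧ vfD (adIter f g N) V x₀ ≠ 0) ∨
          (Even N ∧ vfD (adIter f g N) V x₀ < 0) ∨
          (iterD f V (N + 1) x₀ = 0 ∧ vfD (adIter g f N) V x₀ ≠ 0)) :
    ∃ ρ : ℝ, 0 < ρ ∧ ∃ u₁ : ℝ,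
      ∀ (Φ : ℝ → Euc n → Euc n) (ψ : ℝ → Euc n) (δ : ℝ) (U : Set (Euc n)),
        0 < δ → U ∈ nhds x₀ →
        (∀ z ∈ U, Φ 0 z = z) →
        (∀ z ∈ U, ∀ t ∈ Ioo (-δ) δ,
          HasDerivAt (fun s => Φ s z) (f (Φ t z) + u₁ • g (Φ t z)) t) →
        ψ 0 = x₀ →
        (∀ t ∈ Ioo (-δ) δ, HasDerivAt ψ (f (ψ t) - (ρ * u₁) • g (ψ t)) t) →
        (∀ t ∈ Ioo (-δ) δ, ψ t ∈ U) →
        ∃ σ : ℝ, 0 < σ ∧ σ < δ ∧ ρ * σ < δ ∧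
          ∀ t : ℝ, 0 < t → t ≤ σ → V (Φ (ρ * t) (ψ t)) < V x₀ := by
  set F := op f hf with hF
  set G := op g hg with hG
  set Vs : Sm n := ⟨V, hV⟩ with hVs
  let l : Module.End ℝ (Sm n) →ₗ[ℝ] ℝ :=
    { toFun := fun a => (a Vs).1 x₀
      map_add' := fun a b => rfl
      map_smul' := fun c a => rfl }
  have hl : ∀ a, l a = (a Vs).1 x₀ := fun a => rfl
  have hcore := alg_core F G l N hN (by
    obtain ⟨h1, e1⟩ := op_adIter hf hg N
    obtain ⟨h2, e2⟩ := op_adIter hg hf N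
    have i1 : l (F ^ (N + 1)) = iterD f V (N + 1) x₀ := by
      rw [hl, op_pow, iterD_eq]
    have i2 : l (adR F G N) = vfD (adIter f g N) V x₀ := by
      rw [hl, ← e1]; rfl
    have i3 : l (adR G F N) = vfD (adIter g f N) V x₀ := by
      rw [hl, ← e2]; rfl
    rw [i1, i2, i3]
    exact hP)
  obtain ⟨ρ, hρ, u, hneg⟩ := hcore
  refine ⟨ρ, hρ, u, ?_⟩
  intro Φ ψ δ U hδ hU hΦ0 hΦ hψ0 hψ hψU
  set X : VF n := fun x => f x + u • g x with hXdef
  set Y : VF n := fun x => f x - (ρ * u) • g x with hYdef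
  have hX : ContDiff ℝ (⊤ : ℕ∞) X := hf.add (hg.const_smul u)
  have hY : ContDiff ℝ (⊤ : ℕ∞) Y := hf.sub (hg.const_smul (ρ * u))
  have oX : op X hX = F + u • G := by
    ext W x
    simp [hF, hG, op_apply, hXdef]
  have oY : op Y hY = F - (ρ * u) • G := by
    ext W x
    simp [hF, hG, op_apply, hYdef]
  rw [← oX, ← oY] at hneg
  have hXs : X ∈ Submodule.span ℝ ({f, g} : Set (VF n)) :=
    Submodule.add_mem _ (Submodule.subset_span (by simp))
      (Submodule.smul_mem _ u (Submodule.subset_span (by simp)))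
  have hYs : Y ∈ Submodule.span ℝ ({f, g} : Set (VF n)) :=
    Submodule.sub_mem _ (Submodule.subset_span (by simp))
      (Submodule.smul_mem _ (ρ * u) (Submodule.subset_span (by simp)))
  -- vanishing of low-order words
  have hvan : ∀ i j, 1 ≤ i + j → i + j ≤ N → l (op Y hY ^ i * op X hX ^ j) = 0 := by
    intro i j h1 h2
    rw [hl, Module.End.mul_apply, op_pow, op_pow, ← applyVFs_append]
    refine words hLie _ ?_ ?_ (by simpa using h2)
    · intro Z hZ
      rcases List.mem_append.1 hZ with h | h
      · rw [List.eq_of_mem_replicate h]; exact hYs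
      · rw [List.eq_of_mem_replicate h]; exact hXs
    · intro h
      have := congrArg List.length h
      simp at this
      omega
  -- Taylor estimates
  obtain ⟨T₁, hT₁, hT₁δ, hc₁⟩ := confine X hX x₀ δ hδ
  obtain ⟨T₂, hT₂, hT₂δ, hc₂⟩ := confine Y hY x₀ δ hδ
  obtain ⟨C, hC⟩ := taylor X hX x₀ δ T₁ hT₁δ
    (fun γ => (∀ t ∈ Ioo (-δ) δ, HasDerivAt γ (X (γ t)) t) ∧ ‖γ 0 - x₀‖ ≤ 1 / 2)
    (fun γ h => ⟨h.1, hc₁ γ h.1 h.2⟩) (N + 2) Vs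
  have hD : ∀ j, ∃ D, ∀ s ∈ Icc 0 T₂,
      |((op X hX ^ j) Vs).1 (ψ s) - ∑ i ∈ Finset.range (N + 2 - j),
        s ^ i / (i.factorial : ℝ) * l (op Y hY ^ i * op X hX ^ j)| ≤ D * s ^ (N + 2 - j) := by
    intro j
    obtain ⟨D, hD⟩ := taylor Y hY x₀ δ T₂ hT₂δ
      (fun γ => (∀ t ∈ Ioo (-δ) δ, HasDerivAt γ (Y (γ t)) t) ∧ ‖γ 0 - x₀‖ ≤ 1 / 2)
      (fun γ h => ⟨h.1, hc₂ γ h.1 h.2⟩) (N + 2 - j) ((op X hX ^ j) Vs)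
    refine ⟨D, fun s hs => ?_⟩
    have := hD ψ ⟨hψ, by simp [hψ0]⟩ s hs
    rw [hψ0] at this
    exact this
  choose D hD using hD
  -- the main term
  set c : ℝ := l (Zs (op Y hY) (ρ • op X hX) (N + 1)) with hc
  have hmain : ∀ t : ℝ, ∑ j ∈ Finset.range (N + 2), (ρ * t) ^ j / (j.factorial : ℝ) *
      ∑ i ∈ Finset.range (N + 2 - j), t ^ i / (i.factorial : ℝ) * l (op Y hY ^ i * op X hX ^ j)
      = V x₀ + t ^ (N + 1) / ((N + 1).factorial : ℝ) * c := by
    intro t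
    simp only [Finset.mul_sum]
    rw [← Finset.sum_range_diag_flip (N + 2) (fun j i => (ρ * t) ^ j / (j.factorial : ℝ) *
      (t ^ i / (i.factorial : ℝ) * l (op Y hY ^ i * op X hX ^ j)))]
    rw [Finset.sum_range_succ, Finset.sum_range_succ']
    have e0 : ∑ m ∈ Finset.range N, ∑ k ∈ Finset.range (m + 1 + 1), (ρ * t) ^ k / (k.factorial : ℝ) *
      (t ^ (m + 1 - k) / ((m + 1 - k).factorial : ℝ) * l (op Y hY ^ (m + 1 - k) * op X hX ^ k)) = 0 := by
      refine Finset.sum_eq_zero fun m hm => Finset.sum_eq_zero fun k hk => ?_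
      rw [Finset.mem_range] at hm hk
      rw [hvan _ _ (by omega) (by omega)]
      simp
    rw [e0]
    have e1 : l (1 : Module.End ℝ (Sm n)) = V x₀ := rfl
    have e2 : ∑ k ∈ Finset.range (N + 1 + 1), (ρ * t) ^ k / (k.factorial : ℝ) *
      (t ^ (N + 1 - k) / ((N + 1 - k).factorial : ℝ) * l (op Y hY ^ (N + 1 - k) * op X hX ^ k))
      = t ^ (N + 1) / ((N + 1).factorial : ℝ) * c := by
      rw [hc, Zs_eq, map_sum, Finset.mul_sum]
      refine Finset.sum_congr rfl fun k hk => ?_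
      have hk' : k ≤ N + 1 := by rw [Finset.mem_range] at hk; omega
      rw [smul_pow, mul_smul_comm, map_smul, map_smul, smul_eq_mul, smul_eq_mul,
        Nat.cast_choose ℝ hk', mul_pow]
      have ht : t ^ (N + 1) = t ^ k * t ^ (N + 1 - k) := by rw [← pow_add]; congr 1; omega
      rw [ht]
      have : (k.factorial : ℝ) ≠ 0 := by positivity
      have : ((N + 1 - k).factorial : ℝ) ≠ 0 := by positivity
      have : ((N + 1).factorial : ℝ) ≠ 0 := by positivity
      field_simp
    rw [e2]
    simp [e1]
  -- total remainder constant
  set K : ℝ := |C| * ρ ^ (N + 2) +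
    ∑ j ∈ Finset.range (N + 2), ρ ^ j / (j.factorial : ℝ) * |D j| with hK
  have hK0 : 0 ≤ K := by positivity
  have hest : ∀ t, 0 < t → ρ * t ≤ T₁ → t ≤ T₂ → ‖ψ t - x₀‖ ≤ 1 / 2 →
      V (Φ (ρ * t) (ψ t)) ≤ V x₀ + t ^ (N + 1) / ((N + 1).factorial : ℝ) * c + K * t ^ (N + 2) := by
    intro t ht h1 h2 h3
    have hU' : ψ t ∈ U := hψU t ⟨by linarith, by linarith⟩
    have a1 := hC (fun s => Φ s (ψ t)) ⟨hΦ _ hU', by rw [hΦ0 _ hU']; exact h3⟩ (ρ * t)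
      ⟨by positivity, h1⟩
    rw [hΦ0 _ hU'] at a1
    have a2 : ∀ j ∈ Finset.range (N + 2), (ρ * t) ^ j / (j.factorial : ℝ) * ((op X hX ^ j) Vs).1 (ψ t) ≤
        (ρ * t) ^ j / (j.factorial : ℝ) * ∑ i ∈ Finset.range (N + 2 - j),
        t ^ i / (i.factorial : ℝ) * l (op Y hY ^ i * op X hX ^ j)
        + ρ ^ j / (j.factorial : ℝ) * |D j| * t ^ (N + 2) := by
      intro j hj
      rw [Finset.mem_range] at hj
      have b := (abs_le.1 (hD j t ⟨ht.le, h2⟩)).2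
      have b' : D j * t ^ (N + 2 - j) ≤ |D j| * t ^ (N + 2 - j) :=
        mul_le_mul_of_nonneg_right (le_abs_self _) (by positivity)
      have e : ρ ^ j / (j.factorial : ℝ) * |D j| * t ^ (N + 2)
          = (ρ * t) ^ j / (j.factorial : ℝ) * (|D j| * t ^ (N + 2 - j)) := by
        have ht : t ^ (N + 2) = t ^ j * t ^ (N + 2 - j) := by rw [← pow_add]; congr 1; omega
        rw [ht, mul_pow]; ring
      rw [e, ← mul_add]
      exact mul_le_mul_of_nonneg_left (by linarith) (by positivity)
    have a3 := Finset.sum_le_sum a2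
    rw [Finset.sum_add_distrib, hmain, ← Finset.sum_mul] at a3
    have a4 : C * (ρ * t) ^ (N + 2) ≤ |C| * ρ ^ (N + 2) * t ^ (N + 2) := by
      rw [mul_pow, mul_assoc]
      exact mul_le_mul_of_nonneg_right (le_abs_self _) (by positivity)
    have a5 := (abs_le.1 a1).2
    have a6 : Vs.1 (Φ (ρ * t) (ψ t)) = V (Φ (ρ * t) (ψ t)) := rfl
    rw [a6] at a5
    rw [hK, add_mul]
    linarith
  -- choice of σ
  have hψc : ContinuousAt ψ 0 := (hψ 0 ⟨by linarith, hδ⟩).continuousAt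
  obtain ⟨η, hη, hη'⟩ := Metric.continuousAt_iff.1 hψc (1 / 2) (by norm_num)
  set κ : ℝ := -c / ((N + 1).factorial : ℝ) with hκ
  have hκ0 : 0 < κ := div_pos (by linarith) (by positivity)
  set σ : ℝ := min (min (T₁ / ρ) T₂) (min (η / 2) (κ / (2 * (K + 1)))) with hσ
  have hσ0 : 0 < σ := by positivity
  have s1 : σ ≤ T₁ / ρ := (min_le_left _ _).trans (min_le_left _ _)
  have s2 : σ ≤ T₂ := (min_le_left _ _).trans (min_le_right _ _)
  have s3 : σ ≤ η / 2 := (min_le_right _ _).trans (min_le_left _ _)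
  have s4 : σ ≤ κ / (2 * (K + 1)) := (min_le_right _ _).trans (min_le_right _ _)
  have s1' : ρ * σ ≤ T₁ := by rw [le_div_iff₀ hρ] at s1; linarith
  refine ⟨σ, hσ0, by linarith, by linarith, fun t ht hts => ?_⟩
  have r1 : ρ * t ≤ T₁ := (mul_le_mul_of_nonneg_left hts hρ.le).trans s1'
  have r3 : ‖ψ t - x₀‖ ≤ 1 / 2 := by
    have := hη' (x := t) (by rw [Real.dist_eq, sub_zero, abs_of_pos ht]; linarith)
    rw [hψ0, dist_eq_norm] at this
    exact this.le
  have r4 := hest t ht r1 (hts.trans s2) r3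
  have r5 : K * t < κ := by
    have := hts.trans s4
    rw [le_div_iff₀ (by positivity)] at this
    nlinarith
  have r6 : t ^ (N + 1) / ((N + 1).factorial : ℝ) * c + K * t ^ (N + 2) = t ^ (N + 1) * (K * t - κ) := by
    rw [hκ]; ring
  have r7 : t ^ (N + 1) * (K * t - κ) < 0 := mul_neg_of_pos_of_neg (by positivity) (by linarith)
  linarith
end
end
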